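/- arXiv:1412.6461 — 2 statements merged into one kernel-verified Lean document; each statement's English description precedes it below -/
import Mathlib

section
/- Let u : ℝ³ → ℝ be a smooth solution of the 3D rdDym equation u_ty = u_x·u_xy − u_y·u_xx (coordinates (t,x,y), subscripts denoting partial derivatives). Then the function φ := u_t − x·u_x − u_y + 2u satisfies the linearized equation φ_ty = u_x·φ_xy + u_xy·φ_x − u_y·φ_xx − u_xx·φ_y at every point of ℝ³ (i.e., φ is a symmetry of the 3D rdDym equation). -/
/-- Partial derivative of a function on `ℝ³` in the direction `v`. -/
noncomputable def pd (v : ℝ × ℝ × ℝ) (f : ℝ × ℝ × ℝ → ℝ) : ℝ × ℝ × ℝ → ℝ :=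
  fun p => fderiv ℝ f p v

/-- Coordinates are `(t, x, y)`. -/
noncomputable def dt : (ℝ × ℝ × ℝ → ℝ) → ℝ × ℝ × ℝ → ℝ := pd (1, 0, 0)
noncomputable def dx : (ℝ × ℝ × ℝ → ℝ) → ℝ × ℝ × ℝ → ℝ := pd (0, 1, 0)
noncomputable def dy : (ℝ × ℝ × ℝ → ℝ) → ℝ × ℝ × ℝ → ℝ := pd (0, 0, 1)

/-- The symmetry `φ = u_t − x·u_x − u_y + 2u` of the 3D rdDym equation. -/
noncomputable def phi (u : ℝ × ℝ × ℝ → ℝ) : ℝ × ℝ × ℝ → ℝ :=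
  fun p => dt u p - p.2.1 * dx u p - dy u p + 2 * u p

/-!
Write `F[u] = u_ty − u_x·u_xy + u_y·u_xx` and let `ℓ_u` be its linearization at `u`. The operator
`L = ∂_t − x∂_x − ∂_y + 2` that takes `u` to `φ` is a combination of the generators of translations
in `t` and `y` and of the scaling `u(t, x, y) ↦ λ⁻² u(t, λx, y)`. Since `F` is equivariant under
all of these, `ℓ_u(L u) = L(F[u])` for every `u` of class `C³`, solution or not. If `F[u] = 0` near
a point, the right-hand side vanishes there.
-/

/-- The 3D rdDym operator `F[u] = u_ty − u_x·u_xy + u_y·u_xx`, whose zeros are the solutions of the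
equation. -/
noncomputable def rdDymOp (u : ℝ × ℝ × ℝ → ℝ) : ℝ × ℝ × ℝ → ℝ :=
  dy (dt u) - dx u * dy (dx u) + dy u * dx (dx u)

/-- The linearization `ℓ_u` of the 3D rdDym operator at `u`. -/
noncomputable def rdDymLin (u ψ : ℝ × ℝ × ℝ → ℝ) : ℝ × ℝ × ℝ → ℝ :=
  dy (dt ψ) - dx u * dy (dx ψ) - dy (dx u) * dx ψ + dy u * dx (dx ψ) + dx (dx u) * dy ψ

/-- The coordinate function `x`, as a continuous linear functional on `ℝ³`. -/
noncomputable def xCoord : ℝ × ℝ × ℝ →L[ℝ] ℝ :=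
  (ContinuousLinearMap.fst ℝ ℝ ℝ).comp (ContinuousLinearMap.snd ℝ ℝ (ℝ × ℝ))

theorem xCoord_apply (p : ℝ × ℝ × ℝ) : xCoord p = p.2.1 := rfl

open Filter Topology

section PartialDerivatives

variable {f g : ℝ × ℝ × ℝ → ℝ} {p : ℝ × ℝ × ℝ} (v w : ℝ × ℝ × ℝ)

theorem pd_congr (h : f =ᶠ[𝓝 p] g) : pd v f p = pd v g p := by
  simp only [pd, h.fderiv_eq]

theorem pd_add (hf : DifferentiableAt ℝ f p) (hg : DifferentiableAt ℝ g p) :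
    pd v (f + g) p = pd v f p + pd v g p := by
  simp [pd, fderiv_add hf hg]

theorem pd_sub (hf : DifferentiableAt ℝ f p) (hg : DifferentiableAt ℝ g p) :
    pd v (f - g) p = pd v f p - pd v g p := by
  simp [pd, fderiv_sub hf hg]

theorem pd_const_smul (c : ℝ) (hf : DifferentiableAt ℝ f p) :
    pd v (c • f) p = c * pd v f p := by
  simp [pd, fderiv_const_smul hf]

theorem pd_mul (hf : DifferentiableAt ℝ f p) (hg : DifferentiableAt ℝ g p) :
    pd v (f * g) p = f p * pd v g p + g p * pd v f p := by
  simp [pd, fderiv_mul hf hg]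

theorem pd_const (c : ℝ) : pd v (fun _ => c) = 0 := by
  ext
  simp [pd]

theorem pd_clm (L : ℝ × ℝ × ℝ →L[ℝ] ℝ) : pd v L = fun _ => L v := by
  ext
  simp [pd]

theorem contDiffAt_pd {m n : WithTop ℕ∞} (hf : ContDiffAt ℝ n f p) (hmn : m + 1 ≤ n) :
    ContDiffAt ℝ m (pd v f) p :=
  (hf.fderiv_right hmn).clm_apply contDiffAt_const

theorem differentiableAt_pd (hf : ContDiffAt ℝ 2 f p) : DifferentiableAt ℝ (pd v f) p :=
  (contDiffAt_pd v hf (m := 1) (by norm_num)).differentiableAt one_ne_zero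

theorem eventually_differentiableAt (hf : ContDiffAt ℝ 2 f p) :
    ∀ᶠ q in 𝓝 p, DifferentiableAt ℝ f q :=
  (hf.eventually (by simp)).mono fun _ h => h.differentiableAt two_ne_zero

theorem pd_pd_add (hf : ContDiffAt ℝ 2 f p) (hg : ContDiffAt ℝ 2 g p) :
    pd v (pd w (f + g)) p = pd v (pd w f) p + pd v (pd w g) p := by
  have h : pd w (f + g) =ᶠ[𝓝 p] pd w f + pd w g := by
    filter_upwards [eventually_differentiableAt hf, eventually_differentiableAt hg]
      with q hfq hgq using pd_add w hfq hgq
  rw [pd_congr v h, pd_add v (differentiableAt_pd w hf) (differentiableAt_pd w hg)]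

theorem pd_pd_const_smul (c : ℝ) (hf : ContDiffAt ℝ 2 f p) :
    pd v (pd w (c • f)) p = c * pd v (pd w f) p := by
  have h : pd w (c • f) =ᶠ[𝓝 p] c • pd w f :=
    (eventually_differentiableAt hf).mono fun q hfq => pd_const_smul w c hfq
  rw [pd_congr v h, pd_const_smul v c (differentiableAt_pd w hf)]

theorem pd_pd_mul (hf : ContDiffAt ℝ 2 f p) (hg : ContDiffAt ℝ 2 g p) :
    pd v (pd w (f * g)) p =
      f p * pd v (pd w g) p + pd v f p * pd w g p + pd w f p * pd v g p
        + pd v (pd w f) p * g p := by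
  have h : pd w (f * g) =ᶠ[𝓝 p] f * pd w g + g * pd w f := by
    filter_upwards [eventually_differentiableAt hf, eventually_differentiableAt hg]
      with q hfq hgq using pd_mul w hfq hgq
  have hf₁ := hf.differentiableAt two_ne_zero
  have hg₁ := hg.differentiableAt two_ne_zero
  have hwf := differentiableAt_pd w hf
  have hwg := differentiableAt_pd w hg
  rw [pd_congr v h, pd_add v (hf₁.mul hwg) (hg₁.mul hwf), pd_mul v hf₁ hwg, pd_mul v hg₁ hwf]
  ring

theorem pd_pd_eq_fderiv_fderiv (hf : ContDiffAt ℝ 2 f p) :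
    pd v (pd w f) p = fderiv ℝ (fderiv ℝ f) p v w := by
  have hf' : DifferentiableAt ℝ (fderiv ℝ f) p :=
    (hf.fderiv_right (m := 1) (by norm_num)).differentiableAt one_ne_zero
  unfold pd
  simp [fderiv_clm_apply hf' (differentiableAt_const w)]

theorem pd_comm (hf : ContDiffAt ℝ 2 f p) : pd v (pd w f) p = pd w (pd v f) p := by
  rw [pd_pd_eq_fderiv_fderiv v w hf, pd_pd_eq_fderiv_fderiv w v hf]
  exact hf.isSymmSndFDerivAt (by simp) v w

theorem pd_pd_pd_comm (z : ℝ × ℝ × ℝ) (hf : ContDiffAt ℝ 3 f p) :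
    pd v (pd w (pd z f)) p = pd z (pd v (pd w f)) p := by
  have hwz : pd w (pd z f) =ᶠ[𝓝 p] pd z (pd w f) :=
    (hf.eventually (by simp)).mono fun q hfq => pd_comm w z (hfq.of_le (by norm_num))
  rw [pd_congr v hwz, pd_comm v z (contDiffAt_pd w hf (by norm_num))]

end PartialDerivatives

section Linearization

variable {u ψ χ : ℝ × ℝ × ℝ → ℝ} {p : ℝ × ℝ × ℝ}

theorem rdDymLin_add (hψ : ContDiffAt ℝ 2 ψ p) (hχ : ContDiffAt ℝ 2 χ p) :
    rdDymLin u (ψ + χ) p = rdDymLin u ψ p + rdDymLin u χ p := by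
  have hψ₁ := hψ.differentiableAt two_ne_zero
  have hχ₁ := hχ.differentiableAt two_ne_zero
  simp only [rdDymLin, dt, dx, dy, Pi.add_apply, Pi.sub_apply, Pi.mul_apply,
    pd_add _ hψ₁ hχ₁, pd_pd_add _ _ hψ hχ]
  ring

theorem rdDymLin_const_smul (c : ℝ) (hψ : ContDiffAt ℝ 2 ψ p) :
    rdDymLin u (c • ψ) p = c * rdDymLin u ψ p := by
  simp only [rdDymLin, dt, dx, dy, Pi.add_apply, Pi.sub_apply, Pi.mul_apply,
    pd_const_smul _ c (hψ.differentiableAt two_ne_zero), pd_pd_const_smul _ _ c hψ]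
  ring

theorem rdDymLin_sub (hψ : ContDiffAt ℝ 2 ψ p) (hχ : ContDiffAt ℝ 2 χ p) :
    rdDymLin u (ψ - χ) p = rdDymLin u ψ p - rdDymLin u χ p := by
  have hneg : ContDiffAt ℝ 2 ((-1 : ℝ) • χ) p := hχ.const_smul (-1 : ℝ)
  rw [show ψ - χ = ψ + (-1 : ℝ) • χ by module, rdDymLin_add hψ hneg, rdDymLin_const_smul (-1) hχ]
  ring

theorem rdDymLin_xCoord_mul (hψ : ContDiffAt ℝ 2 ψ p) :
    rdDymLin u (⇑xCoord * ψ) p =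
      p.2.1 * rdDymLin u ψ p - dx u p * dy ψ p - dy (dx u) p * ψ p + 2 * dy u p * dx ψ p := by
  simp only [rdDymLin, dt, dx, dy, Pi.add_apply, Pi.sub_apply, Pi.mul_apply,
    pd_mul _ xCoord.differentiableAt (hψ.differentiableAt two_ne_zero),
    pd_pd_mul _ _ xCoord.contDiff.contDiffAt hψ, pd_clm, pd_const]
  simp only [xCoord_apply, Pi.zero_apply]
  ring

theorem rdDymLin_self (u : ℝ × ℝ × ℝ → ℝ) (p : ℝ × ℝ × ℝ) :
    rdDymLin u u p = rdDymOp u p - dx u p * dy (dx u) p + dy u p * dx (dx u) p := by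
  simp only [rdDymLin, rdDymOp, Pi.add_apply, Pi.sub_apply, Pi.mul_apply]
  ring

/-- Translation invariance, which holds because `F` has constant coefficients. -/
theorem rdDymLin_pd (v : ℝ × ℝ × ℝ) (hu : ContDiffAt ℝ 3 u p) :
    rdDymLin u (pd v u) p = pd v (rdDymOp u) p := by
  have hu₂ : ContDiffAt ℝ 2 u p := hu.of_le (by norm_num)
  have h₁ (w) : DifferentiableAt ℝ (pd w u) p := differentiableAt_pd w hu₂
  have h₂ (w z) : DifferentiableAt ℝ (pd w (pd z u)) p :=
    differentiableAt_pd w (contDiffAt_pd z hu (by norm_num))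
  simp only [rdDymLin, rdDymOp, dt, dx, dy, Pi.add_apply, Pi.sub_apply, Pi.mul_apply]
  rw [pd_add v ((h₂ _ _).sub ((h₁ _).mul (h₂ _ _))) ((h₁ _).mul (h₂ _ _)),
    pd_sub v (h₂ _ _) ((h₁ _).mul (h₂ _ _)), pd_mul v (h₁ _) (h₂ _ _),
    pd_mul v (h₁ _) (h₂ _ _)]
  simp only [pd_pd_pd_comm _ _ v hu, pd_comm _ v hu₂]
  ring

/-- Invariance under the scaling `u(t, x, y) ↦ λ⁻² u(t, λx, y)`, whose generator is
`x·u_x − 2u`. -/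
theorem rdDymLin_scaling (hu : ContDiffAt ℝ 3 u p) :
    rdDymLin u (⇑xCoord * dx u - (2 : ℝ) • u) p =
      p.2.1 * dx (rdDymOp u) p - 2 * rdDymOp u p := by
  have hu₂ : ContDiffAt ℝ 2 u p := hu.of_le (by norm_num)
  have hux : ContDiffAt ℝ 2 (dx u) p := contDiffAt_pd _ hu (by norm_num)
  have hxux : ContDiffAt ℝ 2 (⇑xCoord * dx u) p := xCoord.contDiff.contDiffAt.mul hux
  have h2u : ContDiffAt ℝ 2 ((2 : ℝ) • u) p := hu₂.const_smul (2 : ℝ)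
  have htransl_x : rdDymLin u (dx u) p = dx (rdDymOp u) p := rdDymLin_pd _ hu
  rw [rdDymLin_sub hxux h2u, rdDymLin_xCoord_mul hux, rdDymLin_const_smul 2 hu₂, rdDymLin_self,
    htransl_x]
  ring

theorem phi_eq_translation_sub_scaling (u : ℝ × ℝ × ℝ → ℝ) :
    phi u = dt u - dy u - (⇑xCoord * dx u - (2 : ℝ) • u) := by
  ext p
  simp only [phi, xCoord_apply, Pi.sub_apply, Pi.mul_apply, Pi.smul_apply, smul_eq_mul]
  ring

theorem rdDymLin_phi (hu : ContDiffAt ℝ 3 u p) :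
    rdDymLin u (phi u) p = phi (rdDymOp u) p := by
  have hut : ContDiffAt ℝ 2 (dt u) p := contDiffAt_pd _ hu (by norm_num)
  have hux : ContDiffAt ℝ 2 (dx u) p := contDiffAt_pd _ hu (by norm_num)
  have huy : ContDiffAt ℝ 2 (dy u) p := contDiffAt_pd _ hu (by norm_num)
  have hut_sub_uy : ContDiffAt ℝ 2 (dt u - dy u) p := hut.sub huy
  have hscal : ContDiffAt ℝ 2 (⇑xCoord * dx u - (2 : ℝ) • u) p :=
    (xCoord.contDiff.contDiffAt.mul hux).sub ((hu.of_le (by norm_num)).const_smul (2 : ℝ))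
  have htransl_t : rdDymLin u (dt u) p = dt (rdDymOp u) p := rdDymLin_pd _ hu
  have htransl_y : rdDymLin u (dy u) p = dy (rdDymOp u) p := rdDymLin_pd _ hu
  rw [phi_eq_translation_sub_scaling, rdDymLin_sub hut_sub_uy hscal, rdDymLin_sub hut huy,
    htransl_t, htransl_y, rdDymLin_scaling hu]
  simp only [phi]
  ring

theorem phi_eq_zero_of_eventuallyEq_zero (hψ : ψ =ᶠ[𝓝 p] 0) : phi ψ p = 0 := by
  have hpd (v) : pd v ψ p = 0 := by
    rw [pd_congr v hψ]
    exact congrFun (pd_const v 0) p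
  simp [phi, dt, dx, dy, hpd, hψ.eq_of_nhds]

end Linearization

theorem rdDym_symmetry_general {u : ℝ × ℝ × ℝ → ℝ} {p : ℝ × ℝ × ℝ}
    (hu : ContDiffAt ℝ 3 u p)
    (hsol : ∀ᶠ q in 𝓝 p, dy (dt u) q = dx u q * dy (dx u) q - dy u q * dx (dx u) q) :
    dy (dt (phi u)) p =
      dx u p * dy (dx (phi u)) p + dy (dx u) p * dx (phi u) p
        - dy u p * dx (dx (phi u)) p - dx (dx u) p * dy (phi u) p := by
  have hF : rdDymOp u =ᶠ[𝓝 p] 0 := by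
    filter_upwards [hsol] with q hq
    simp only [rdDymOp, Pi.add_apply, Pi.sub_apply, Pi.mul_apply, Pi.zero_apply]
    linear_combination hq
  have hlin : rdDymLin u (phi u) p = 0 :=
    (rdDymLin_phi hu).trans (phi_eq_zero_of_eventuallyEq_zero hF)
  simp only [rdDymLin, Pi.add_apply, Pi.sub_apply, Pi.mul_apply] at hlin
  linear_combination hlin

/-- If `u` is a smooth solution of the 3D rdDym equation
`u_ty = u_x·u_xy − u_y·u_xx`, then `φ = u_t − x·u_x − u_y + 2u` satisfies the
linearized equation `φ_ty = u_x·φ_xy + u_xy·φ_x − u_y·φ_xx − u_xx·φ_y`. -/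
theorem rdDym_symmetry (u : ℝ × ℝ × ℝ → ℝ)
    (hu : ContDiff ℝ (⊤ : ℕ∞) u)
    (hsol : ∀ p : ℝ × ℝ × ℝ,
      dy (dt u) p = dx u p * dy (dx u) p - dy u p * dx (dx u) p) :
    ∀ p : ℝ × ℝ × ℝ,
      dy (dt (phi u)) p =
        dx u p * dy (dx (phi u)) p + dy (dx u) p * dx (phi u) p
          - dy u p * dx (dx (phi u)) p - dx (dx u) p * dy (phi u) p :=
  fun _ => rdDym_symmetry_general (contDiff_infty.1 hu 3).contDiffAt (.of_forall hsol)
end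

section
/- Define D(x,y,p,q,w) := w² − (q+x)w + x·q − p − 2y and the rational functions X := −w(w−q)/D and Y := −w/D. Then for all real numbers x, y, p, q, s, t, w with D(x,y,p,q,w) ≠ 0, setting r := (x−q)·s + (2y+p)·t − q, the identity ∂X/∂y + (∂X/∂p)·s + (∂X/∂q)·t + (∂X/∂w)·Y = ∂Y/∂x + (∂Y/∂p)·r + (∂Y/∂q)·s + (∂Y/∂w)·X holds, all partial derivatives being taken at the point (x,y,p,q,w). (Here p,q,r,s,t stand for u_x,u_y,u_xx,u_xy,u_yy, r being eliminated via Equation (E3); the identity is exactly the cross-derivative compatibility condition asserting that the system w_x = X, w_y = Y is a differential covering of Equation (E3).) -/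
/-! Since `X = (w - q) Y`, the terms `X_w Y` and `Y_w X` differ by `Y²`, and the compatibility
condition becomes `(w - q) (Y_y + Y_p s + Y_q t) + (Y - t) Y = Y_x + Y_p r + Y_q s`, free of `Y_w`.
For every `z` other than `w` one has `Y_z = (w / D²) D_z`, while `(Y - t) Y = (w / D²) (w + t D)`.
Up to the factor `w / D²` what is left is a polynomial identity, which holds because
`D = (w - q) (w - x) - (2 y + p)`. -/

/-- Denominator `D(x,y,p,q,w) = w² − (q+x)w + xq − p − 2y` of the covering (13). -/
noncomputable def covD (x y p q w : ℝ) : ℝ := w ^ 2 - (q + x) * w + x * q - p - 2 * y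

/-- `X = −w(w − q)/D` from the covering (13) of Equation (E3). -/
noncomputable def covX (x y p q w : ℝ) : ℝ := -(w * (w - q)) / covD x y p q w

/-- `Y = −w/D` from the covering (13) of Equation (E3). -/
noncomputable def covY (x y p q w : ℝ) : ℝ := -w / covD x y p q w

theorem covX_eq_sub_mul_covY (x y p q w : ℝ) :
    covX x y p q w = (w - q) * covY x y p q w := by
  unfold covX covY
  ring

theorem covD_compatibility (x y p q s t w : ℝ) :
    (w - q) * (-2 - s + (x - w) * t) + (w + t * covD x y p q w)
      = (q - w) - ((x - q) * s + (2 * y + p) * t - q) + (x - w) * s := by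
  unfold covD
  ring

theorem covY_sub_mul_covY {x y p q w : ℝ} (hD : covD x y p q w ≠ 0) (t : ℝ) :
    (covY x y p q w - t) * covY x y p q w
      = w / covD x y p q w ^ 2 * (w + t * covD x y p q w) := by
  unfold covY
  field_simp
  ring

section Curves

variable {x y p q w : ℝ → ℝ} {x' y' p' q' w' Y' a : ℝ}

theorem hasDerivAt_covD (hx : HasDerivAt x x' a) (hy : HasDerivAt y y' a)
    (hp : HasDerivAt p p' a) (hq : HasDerivAt q q' a) (hw : HasDerivAt w w' a) :
    HasDerivAt (fun z => covD (x z) (y z) (p z) (q z) (w z))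
      ((w' - q') * (w a - x a) + (w a - q a) * (w' - x') - p' - 2 * y') a := by
  have hfactored := (((hw.sub hq).mul (hw.sub hx)).sub hp).sub (hy.const_mul 2)
  refine hfactored.congr_of_eventuallyEq (.of_forall fun z => ?_)
  simp only [covD, Pi.sub_apply, Pi.mul_apply]
  ring

theorem hasDerivAt_covY (hx : HasDerivAt x x' a) (hy : HasDerivAt y y' a)
    (hp : HasDerivAt p p' a) (hq : HasDerivAt q q' a) (hw : HasDerivAt w w' a)
    (hD : covD (x a) (y a) (p a) (q a) (w a) ≠ 0) :
    HasDerivAt (fun z => covY (x z) (y z) (p z) (q z) (w z))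
      (w a / covD (x a) (y a) (p a) (q a) (w a) ^ 2
          * ((w' - q') * (w a - x a) + (w a - q a) * (w' - x') - p' - 2 * y')
        - w' / covD (x a) (y a) (p a) (q a) (w a)) a := by
  refine (hw.neg.div (hasDerivAt_covD hx hy hp hq hw) hD).congr_deriv ?_
  simp only [Pi.neg_apply]
  field_simp
  ring

theorem hasDerivAt_covX (hq : HasDerivAt q q' a) (hw : HasDerivAt w w' a)
    (hY : HasDerivAt (fun z => covY (x z) (y z) (p z) (q z) (w z)) Y' a) :
    HasDerivAt (fun z => covX (x z) (y z) (p z) (q z) (w z))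
      ((w' - q') * covY (x a) (y a) (p a) (q a) (w a) + (w a - q a) * Y') a := by
  simp only [covX_eq_sub_mul_covY]
  exact (hw.sub hq).mul hY

end Curves

section Partials

variable {x y p q w : ℝ}

theorem hasDerivAt_covY_x (hD : covD x y p q w ≠ 0) :
    HasDerivAt (fun x' => covY x' y p q w) (w / covD x y p q w ^ 2 * (q - w)) x :=
  (hasDerivAt_covY (hasDerivAt_id' x) (hasDerivAt_const x y) (hasDerivAt_const x p)
    (hasDerivAt_const x q) (hasDerivAt_const x w) hD).congr_deriv (by ring)

theorem hasDerivAt_covY_y (hD : covD x y p q w ≠ 0) :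
    HasDerivAt (fun y' => covY x y' p q w) (w / covD x y p q w ^ 2 * (-2)) y :=
  (hasDerivAt_covY (hasDerivAt_const y x) (hasDerivAt_id' y) (hasDerivAt_const y p)
    (hasDerivAt_const y q) (hasDerivAt_const y w) hD).congr_deriv (by ring)

theorem hasDerivAt_covY_p (hD : covD x y p q w ≠ 0) :
    HasDerivAt (fun p' => covY x y p' q w) (w / covD x y p q w ^ 2 * (-1)) p :=
  (hasDerivAt_covY (hasDerivAt_const p x) (hasDerivAt_const p y) (hasDerivAt_id' p)
    (hasDerivAt_const p q) (hasDerivAt_const p w) hD).congr_deriv (by ring)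

theorem hasDerivAt_covY_q (hD : covD x y p q w ≠ 0) :
    HasDerivAt (fun q' => covY x y p q' w) (w / covD x y p q w ^ 2 * (x - w)) q :=
  (hasDerivAt_covY (hasDerivAt_const q x) (hasDerivAt_const q y) (hasDerivAt_const q p)
    (hasDerivAt_id' q) (hasDerivAt_const q w) hD).congr_deriv (by ring)

theorem differentiableAt_covY_w (hD : covD x y p q w ≠ 0) :
    DifferentiableAt ℝ (fun w' => covY x y p q w') w :=
  (hasDerivAt_covY (hasDerivAt_const w x) (hasDerivAt_const w y) (hasDerivAt_const w p)
    (hasDerivAt_const w q) (hasDerivAt_id' w) hD).differentiableAt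

end Partials

/-- Cross-derivative compatibility `D_y(X) = D_x(Y)` of the covering
`w_x = X`, `w_y = Y` over Equation (E3)
`u_xx = (x − u_y)·u_xy + (2y + u_x)·u_yy − u_y`, where `p,q,r,s,t` stand for
`u_x,u_y,u_xx,u_xy,u_yy` and `r = (x−q)·s + (2y+p)·t − q` is eliminated via (E3). -/
theorem covering_E3_compatibility (x y p q s t w : ℝ)
    (hD : covD x y p q w ≠ 0) :
    deriv (fun y' => covX x y' p q w) y
      + deriv (fun p' => covX x y p' q w) p * s
      + deriv (fun q' => covX x y p q' w) q * t
      + deriv (fun w' => covX x y p q w') w * covY x y p q w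
    = deriv (fun x' => covY x' y p q w) x
      + deriv (fun p' => covY x y p' q w) p * ((x - q) * s + (2 * y + p) * t - q)
      + deriv (fun q' => covY x y p q' w) q * s
      + deriv (fun w' => covY x y p q w') w * covX x y p q w := by
  have hYx := hasDerivAt_covY_x hD
  have hYy := hasDerivAt_covY_y hD
  have hYp := hasDerivAt_covY_p hD
  have hYq := hasDerivAt_covY_q hD
  have hYw := (differentiableAt_covY_w hD).hasDerivAt
  have hXy := hasDerivAt_covX (hasDerivAt_const y q) (hasDerivAt_const y w) hYy
  have hXp := hasDerivAt_covX (hasDerivAt_const p q) (hasDerivAt_const p w) hYp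
  have hXq := hasDerivAt_covX (hasDerivAt_id' q) (hasDerivAt_const q w) hYq
  have hXw := hasDerivAt_covX (hasDerivAt_const w q) (hasDerivAt_id' w) hYw
  rw [hXy.deriv, hXp.deriv, hXq.deriv, hXw.deriv, hYx.deriv, hYp.deriv, hYq.deriv,
    covX_eq_sub_mul_covY]
  linear_combination
    covY_sub_mul_covY hD t + w / covD x y p q w ^ 2 * covD_compatibility x y p q s t w
end
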